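/- arXiv:0806.2525 — 2 statements merged into one kernel-verified Lean document; each statement's English description precedes it below -/
import Mathlib

section
/- Suppose Q is a transition kernel on ℤ^d with invariant measure π satisfying c ≤ π(x) ≤ C for all x (0 < c ≤ C < ∞), Q is strongly irreducible with constants (ε,N), and Q has range bounded by B. Then there exist an integer m ≥ 1 and a constant κ > 0, depending only on d, c, C, ε, N and B, such that the transition kernel (Q^m)*Q^m satisfies the d-dimensional Nash inequality: for every f ∈ ℓ₀(ℤ^d), 𝓔_{(Q^m)*Q^m}(f,f) ≥ κ ‖f‖_{L²(π)}^{2+4/d} ‖f‖_{L¹(π)}^{−4/d}. -/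
open scoped Classical

noncomputable section

/-- Points of `ℤ^d`. -/
abbrev Zd (d : ℕ) := Fin d → ℤ

/-- Euclidean norm on `ℤ^d`. -/
def eucNorm {d : ℕ} (v : Zd d) : ℝ := Real.sqrt (∑ i, ((v i : ℝ)) ^ 2)

/-- `n`-fold composition of a transition kernel. -/
def kerpow {d : ℕ} (Q : Zd d → Zd d → ℝ) : ℕ → Zd d → Zd d → ℝ
  | 0 => fun x y => if x = y then 1 else 0
  | m + 1 => fun x y => ∑' zz : Zd d, kerpow Q m x zz * Q zz y

/-- Adjoint of a kernel with respect to the measure `π`. -/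
def adjK {d : ℕ} (π : Zd d → ℝ) (Q : Zd d → Zd d → ℝ) (x y : Zd d) : ℝ :=
  π y * Q y x / π x

/-- Composition of two kernels. -/
def compK {d : ℕ} (Q₁ Q₂ : Zd d → Zd d → ℝ) (x y : Zd d) : ℝ :=
  ∑' zz : Zd d, Q₁ x zz * Q₂ zz y

/-- Dirichlet form of the kernel `Q` with respect to `π`. -/
def dirichlet {d : ℕ} (π : Zd d → ℝ) (Q : Zd d → Zd d → ℝ) (f : Zd d → ℝ) : ℝ :=
  (1 / 2) * ∑' p : Zd d × Zd d, (f p.2 - f p.1) ^ 2 * π p.1 * Q p.1 p.2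

/-- `L²(π)`-norm. -/
def l2norm {d : ℕ} (π : Zd d → ℝ) (f : Zd d → ℝ) : ℝ := Real.sqrt (∑' x, (f x) ^ 2 * π x)

/-- `L¹(π)`-norm. -/
def l1norm {d : ℕ} (π : Zd d → ℝ) (f : Zd d → ℝ) : ℝ := ∑' x, |f x| * π x

section Auxiliary

variable {d : ℕ}

/-- `y` lies within distance `k` of `x` for the supremum norm. -/
def Near (k : ℕ) (x y : Zd d) : Prop := ∀ i, |y i - x i| ≤ (k : ℤ)

lemma Near.refl (x : Zd d) : Near 0 x x := fun i => by simp

lemma Near.symm {k : ℕ} {x y : Zd d} (h : Near k x y) : Near k y x := fun i => by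
  rw [abs_sub_comm]; exact h i

lemma Near.trans {k l : ℕ} {x y z : Zd d} (h : Near k x y) (h' : Near l y z) :
    Near (k + l) x z := fun i => by
  have h₁ := h i
  have h₂ := h' i
  have h₃ := abs_sub_le (z i) (y i) (x i)
  push_cast
  linarith

lemma Near.mono {k l : ℕ} (hkl : k ≤ l) {x y : Zd d} (h : Near k x y) : Near l x y := fun i =>
  (h i).trans (by exact_mod_cast hkl)

/-- The points within supremum distance `k` of `x`. -/
def box (k : ℕ) (x : Zd d) : Finset (Zd d) :=
  Finset.Icc (fun i => x i - k) (fun i => x i + k)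

lemma mem_box {k : ℕ} {x y : Zd d} : y ∈ box k x ↔ Near k x y := by
  simp only [box, Finset.mem_Icc, Pi.le_def, Near, abs_le, ← forall_and]
  exact forall_congr' fun i => by constructor <;> intro h <;> constructor <;> linarith [h.1, h.2]

lemma card_box (k : ℕ) (x : Zd d) : (box k x).card = (2 * k + 1) ^ d := by
  rw [box, Pi.card_Icc]
  have : ∀ i, (Finset.Icc (x i - (k : ℤ)) (x i + k)).card = 2 * k + 1 := fun i => by
    rw [Int.card_Icc]; lia
  simp [this]

lemma near_of_eucNorm_le {B : ℝ} {x y : Zd d} (h : eucNorm (y - x) ≤ B) : Near ⌈B⌉₊ x y := by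
  intro i
  have h₁ : |((y i - x i : ℤ) : ℝ)| ≤ eucNorm (y - x) := by
    rw [eucNorm, ← Real.sqrt_sq_eq_abs]
    apply Real.sqrt_le_sqrt
    exact Finset.single_le_sum (f := fun i => (((y - x) i : ℤ) : ℝ) ^ 2)
      (fun j _ => sq_nonneg _) (Finset.mem_univ i)
  have h₂ : ((|y i - x i| : ℤ) : ℝ) ≤ ((⌈B⌉₊ : ℤ) : ℝ) := by
    push_cast at h₁ ⊢
    exact h₁.trans (h.trans (Nat.le_ceil B))
  exact_mod_cast h₂

lemma eucNorm_single (i : Fin d) (a : ℤ) : eucNorm (Pi.single i a : Zd d) = |(a : ℝ)| := by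
  rw [eucNorm, ← Real.sqrt_sq_eq_abs]
  congr 1
  rw [Finset.sum_eq_single i]
  · simp
  · intro j _ hj; simp [hj]
  · simp

section Kernel

variable {Q : Zd d → Zd d → ℝ} {b : ℕ}

lemma kerpow_nonneg (h0 : ∀ x y, 0 ≤ Q x y) (n : ℕ) (x y : Zd d) : 0 ≤ kerpow Q n x y := by
  induction n generalizing x y with
  | zero => simp only [kerpow]; split_ifs <;> norm_num
  | succ n ih => exact tsum_nonneg fun z => mul_nonneg (ih x z) (h0 z y)

lemma summable_of_near {k : ℕ} {x : Zd d} {g : Zd d → ℝ} (h : ∀ y, g y ≠ 0 → Near k x y) :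
    Summable g :=
  summable_of_ne_finset_zero (s := box k x) fun y hy => by
    by_contra hne
    exact hy (mem_box.2 (h y hne))

lemma near_of_kerpow_ne_zero (hb : ∀ x y, Q x y ≠ 0 → Near b x y) (n : ℕ) (x y : Zd d)
    (h : kerpow Q n x y ≠ 0) : Near (n * b) x y := by
  induction n generalizing y with
  | zero =>
    simp only [kerpow, ne_eq, ite_eq_right_iff, one_ne_zero, imp_false, not_not] at h
    subst h
    simpa using Near.refl x
  | succ n ih =>
    have : ∃ z, kerpow Q n x z * Q z y ≠ 0 := by
      by_contra! hz
      exact h (by simp [kerpow, hz])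
    obtain ⟨z, hz⟩ := this
    have := (ih z (left_ne_zero_of_mul hz)).trans (hb z y (right_ne_zero_of_mul hz))
    rwa [Nat.succ_mul]

lemma mul_le_kerpow_add (h0 : ∀ x y, 0 ≤ Q x y) (hb : ∀ x y, Q x y ≠ 0 → Near b x y)
    (n k : ℕ) (x y z : Zd d) :
    kerpow Q n x y * kerpow Q k y z ≤ kerpow Q (n + k) x z := by
  have hsum : ∀ (j : ℕ) (v w : Zd d), Summable fun u => kerpow Q j v u * Q u w := fun j v w =>
    summable_of_near fun u hu => near_of_kerpow_ne_zero hb j v u (left_ne_zero_of_mul hu)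
  induction k generalizing z with
  | zero =>
    by_cases hyz : y = z
    · simp [kerpow, hyz]
    · simpa [kerpow, hyz] using kerpow_nonneg h0 n x z
  | succ k ih =>
    change kerpow Q n x y * (∑' w, kerpow Q k y w * Q w z) ≤ ∑' w, kerpow Q (n + k) x w * Q w z
    rw [← tsum_mul_left]
    refine Summable.tsum_le_tsum (fun w => ?_) ((hsum k y z).mul_left _) (hsum _ x z)
    rw [← mul_assoc]
    exact mul_le_mul_of_nonneg_right (ih w) (h0 w z)

lemma kerpow_one (x y : Zd d) : kerpow Q 1 x y = Q x y := by
  simp only [kerpow]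
  rw [tsum_eq_single x (fun z hz => by simp [hz.symm])]
  simp

/-- `Q` travels from `x` to `y` in `n` steps with probability at least `η ^ n`. -/
def Travels (Q : Zd d → Zd d → ℝ) (η : ℝ) (n : ℕ) (x y : Zd d) : Prop :=
  η ^ n ≤ kerpow Q n x y

lemma Travels.refl (η : ℝ) (x : Zd d) : Travels Q η 0 x x := by simp [Travels, kerpow]

variable {η : ℝ}

lemma Travels.trans (h0 : ∀ x y, 0 ≤ Q x y) (hb : ∀ x y, Q x y ≠ 0 → Near b x y) (hη : 0 < η)
    {n k : ℕ} {x y z : Zd d} (h : Travels Q η n x y) (h' : Travels Q η k y z) :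
    Travels Q η (n + k) x z := by
  refine le_trans ?_ (mul_le_kerpow_add h0 hb n k x y z)
  rw [pow_add]
  exact mul_le_mul h h' (by positivity) (kerpow_nonneg h0 n x y)

lemma Travels.near (hb : ∀ x y, Q x y ≠ 0 → Near b x y) (hη : 0 < η)
    {n : ℕ} {x y : Zd d} (h : Travels Q η n x y) : Near (n * b) x y :=
  near_of_kerpow_ne_zero hb n x y (lt_of_lt_of_le (pow_pos hη n) h).ne'

lemma Travels.self_mul (h0 : ∀ x y, 0 ≤ Q x y) (hb : ∀ x y, Q x y ≠ 0 → Near b x y) (hη : 0 < η)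
    {n : ℕ} {x : Zd d} (h : Travels Q η n x x) (k : ℕ) : Travels Q η (n * k) x x := by
  induction k with
  | zero => exact Travels.refl η x
  | succ k ih => exact ih.trans h0 hb hη h

/-- From every point one can keep going for any number of steps. -/
lemma exists_travels (h0 : ∀ x y, 0 ≤ Q x y) (hb : ∀ x y, Q x y ≠ 0 → Near b x y)
    (h1 : ∀ x, HasSum (fun y => Q x y) 1) (hη : 0 < η) (hηb : η * (2 * b + 1) ^ d ≤ 1)
    (n : ℕ) (x : Zd d) : ∃ y, Travels Q η n x y := by
  induction n with
  | zero => exact ⟨x, Travels.refl η x⟩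
  | succ n ih =>
    obtain ⟨y, hy⟩ := ih
    have hs : ∑ z ∈ box b y, Q y z = 1 := by
      rw [← (h1 y).tsum_eq]
      refine (tsum_eq_sum fun z hz => ?_).symm
      by_contra hne
      exact hz (mem_box.2 (hb y z hne))
    have : ∃ z ∈ box b y, η ≤ Q y z := by
      apply Finset.exists_le_of_sum_le ⟨y, mem_box.2 ((Near.refl y).mono (Nat.zero_le b))⟩
      rw [hs, Finset.sum_const, card_box, nsmul_eq_mul]
      push_cast
      linarith
    obtain ⟨z, -, hz⟩ := this
    refine ⟨z, hy.trans h0 hb hη ?_⟩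
    simpa [Travels, kerpow_one] using hz

/-- Nearest-neighbour moves with travel time at most `N` let one travel between any two points. -/
lemma exists_travels_of_near (h0 : ∀ x y, 0 ≤ Q x y) (hb : ∀ x y, Q x y ≠ 0 → Near b x y)
    (hη : 0 < η) {N : ℕ}
    (hN : ∀ x e : Zd d, eucNorm e = 1 → ∃ n ≤ N, Travels Q η n x (x + e))
    {k : ℕ} {x y : Zd d} (h : Near k x y) : ∃ n ≤ N * (d * k), Travels Q η n x y := by
  have key : ∀ (l : ℕ) (x : Zd d), ∑ i, (y i - x i).natAbs = l →
      ∃ n ≤ N * l, Travels Q η n x y := by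
    intro l
    induction l with
    | zero =>
      intro x hx
      have : x = y := by
        ext i
        have := (Finset.sum_eq_zero_iff.1 hx) i (Finset.mem_univ i)
        lia
      subst this
      exact ⟨0, le_rfl, Travels.refl η x⟩
    | succ l ih =>
      intro x hx
      have : ∃ i, (y i - x i).natAbs ≠ 0 := by
        by_contra! hz
        simp [hz] at hx
      obtain ⟨i, hi⟩ := this
      have hstep : ∃ a : ℤ, |a| = 1 ∧ (y i - (x i + a)).natAbs + 1 = (y i - x i).natAbs := by
        rcases lt_or_gt_of_ne (show y i - x i ≠ 0 by lia) with hlt | hgt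
        · exact ⟨-1, by norm_num, by lia⟩
        · exact ⟨1, by norm_num, by lia⟩
      obtain ⟨a, ha, hia⟩ := hstep
      obtain ⟨n, hn, hxn⟩ := hN x (Pi.single i a) (by
        rw [eucNorm_single]; exact_mod_cast ha)
      obtain ⟨n', hn', hyn⟩ := ih (x + Pi.single i a) (by
        rw [← Finset.add_sum_erase _ _ (Finset.mem_univ i)] at hx ⊢
        have : ∑ j ∈ Finset.univ.erase i, (y j - (x + (Pi.single i a : Zd d)) j).natAbs
            = ∑ j ∈ Finset.univ.erase i, (y j - x j).natAbs :=
          Finset.sum_congr rfl fun j hj => by simp [Finset.ne_of_mem_erase hj]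
        rw [this]
        simp only [Pi.add_apply, Pi.single_eq_same]
        lia)
      exact ⟨n + n', by rw [Nat.mul_succ]; lia, hxn.trans h0 hb hη hyn⟩
  obtain ⟨n, hn, hxy⟩ := key _ x rfl
  refine ⟨n, hn.trans (Nat.mul_le_mul_left N ?_), hxy⟩
  calc ∑ i, (y i - x i).natAbs ≤ ∑ _i : Fin d, k := Finset.sum_le_sum fun i _ => by
        have := abs_le.1 (h i); lia
    _ = d * k := by simp

/-- Every point returns to itself after `(2 * N)!` steps. -/
lemma travels_self_factorial (hd : 0 < d) (h0 : ∀ x y, 0 ≤ Q x y)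
    (hb : ∀ x y, Q x y ≠ 0 → Near b x y) (hη : 0 < η) {N : ℕ}
    (hN : ∀ x e : Zd d, eucNorm e = 1 → ∃ n ≤ N, 0 < n ∧ Travels Q η n x (x + e)) (x : Zd d) :
    Travels Q η (2 * N).factorial x x := by
  obtain ⟨n, hn, hn0, hx⟩ := hN x (Pi.single ⟨0, hd⟩ 1) (by rw [eucNorm_single]; norm_num)
  obtain ⟨n', hn', -, hx'⟩ := hN (x + Pi.single ⟨0, hd⟩ 1) (Pi.single ⟨0, hd⟩ (-1))
    (by rw [eucNorm_single]; norm_num)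
  have hret : Travels Q η (n + n') x x := by
    have := hx.trans h0 hb hη hx'
    rwa [add_assoc, ← Pi.single_add, add_neg_cancel, Pi.single_zero, add_zero] at this
  obtain ⟨k, hk⟩ := Nat.dvd_factorial (m := n + n') (n := 2 * N) (by lia) (by lia)
  rw [hk]
  exact hret.self_mul h0 hb hη k

/-- In a common number `m` of steps, one can both stay put and come close to any given nearby
point. -/
lemma exists_travels_near (hd : 0 < d) (h0 : ∀ x y, 0 ≤ Q x y)
    (hb : ∀ x y, Q x y ≠ 0 → Near b x y) (h1 : ∀ x, HasSum (fun y => Q x y) 1)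
    (hη : 0 < η) (hηb : η * (2 * b + 1) ^ d ≤ 1) {N : ℕ}
    (hN : ∀ x e : Zd d, eucNorm e = 1 → ∃ n ≤ N, 0 < n ∧ Travels Q η n x (x + e))
    {K m : ℕ} (hK : K = (2 * N).factorial * b)
    (hm : m = (2 * N).factorial * (N * (d * (K + 1)) + 1)) (x t : Zd d) (ht : Near (K + 1) x t) :
    ∃ y, Near K t y ∧ Travels Q η m x x ∧ Travels Q η m x y := by
  have hret := travels_self_factorial hd h0 hb hη hN
  obtain ⟨T, hT, hxt⟩ := exists_travels_of_near h0 hb hη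
    (fun x e he => (hN x e he).imp fun n hn => ⟨hn.1, hn.2.2⟩) ht
  set M := (2 * N).factorial with hM
  have hMpos : 0 < M := Nat.factorial_pos _
  have hlt : T < M * (T / M + 1) := by
    rw [mul_add, mul_one]; exact Nat.lt_mul_div_succ T hMpos
  have hle : M * (T / M) ≤ T := Nat.mul_div_le T M
  obtain ⟨y, hy⟩ := exists_travels h0 hb h1 hη hηb (M * (T / M + 1) - T) t
  refine ⟨y, (hy.near hb hη).mono ?_, ?_, ?_⟩
  · rw [hK]
    refine Nat.mul_le_mul_right b ?_
    rw [mul_add, mul_one]; lia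
  · rw [hm]; exact (hret x).self_mul h0 hb hη _
  · have h₁ := hxt.trans h0 hb hη hy
    have h₂ := h₁.trans h0 hb hη
      ((hret y).self_mul h0 hb hη (N * (d * (K + 1)) + 1 - (T / M + 1)))
    have hdiv : T / M ≤ T := Nat.div_le_self T M
    rwa [Nat.add_sub_cancel' hlt.le, ← mul_add, Nat.add_sub_cancel' (by lia), ← hm] at h₂

end Kernel

section Averaging

lemma sum_comp_le_of_card_fiber_le {α β : Type*} [DecidableEq β] (s : Finset α) (g : α → β)
    {F : β → ℝ} (hF : ∀ y, 0 ≤ F y) {n : ℕ} (hn : ∀ y, (s.filter fun a => g a = y).card ≤ n) :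
    ∑ a ∈ s, F (g a) ≤ n * ∑ y ∈ s.image g, F y := by
  rw [Finset.sum_comp, Finset.mul_sum]
  refine Finset.sum_le_sum fun y _ => ?_
  rw [nsmul_eq_mul]
  exact mul_le_mul_of_nonneg_right (by exact_mod_cast hn y) (hF y)

lemma sq_sub_le_mul_sum_range (g : ℕ → ℝ) (r : ℕ) :
    (g 0 - g r) ^ 2 ≤ r * ∑ k ∈ Finset.range r, (g (k + 1) - g k) ^ 2 := by
  have := sq_sum_le_card_mul_sum_sq (s := Finset.range r) (f := fun k => g (k + 1) - g k)
  rw [Finset.sum_range_sub, Finset.card_range] at this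
  linarith [sub_sq_comm (g 0) (g r)]

variable {Good : Zd d → Zd d → Prop} {K : ℕ}

/-- A path with bounded increments can be tracked, without accumulating errors, by a path made
of good moves. -/
lemma exists_tracking (H : ∀ y t, Near (K + 1) y t → ∃ z, Near K t z ∧ Good y z)
    (p : ℕ → Zd d) (hp : ∀ k, Near 1 (p k) (p (k + 1))) :
    ∃ y : ℕ → Zd d, y 0 = p 0 ∧ ∀ k, Near K (p k) (y k) ∧ Good (y k) (y (k + 1)) := by
  choose! h hh using H
  let y : ℕ → Zd d := fun k => Nat.rec (p 0) (fun k z => h z (p (k + 1))) k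
  have hnear : ∀ k, Near K (p k) (y k) := by
    intro k
    induction k with
    | zero => exact (Near.refl (p 0)).mono (Nat.zero_le K)
    | succ k ih => exact (hh _ _ (ih.symm.trans (hp k))).1
  exact ⟨y, rfl, fun k => ⟨hnear k, (hh _ _ ((hnear k).symm.trans (hp k))).2⟩⟩

lemma card_filter_le_of_near {ι : Type*} (s : Finset ι) (g : ι → Zd d) (hg : Function.Injective g)
    (P : ι → Prop) [DecidablePred P] (x : Zd d) (h : ∀ a ∈ s, P a → Near K x (g a)) :
    (s.filter P).card ≤ (2 * K + 1) ^ d := by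
  rw [← card_box K x]
  refine Finset.card_le_card_of_injOn g (fun a ha => ?_) hg.injOn
  have ha' := Finset.mem_filter.1 ha
  exact mem_box.2 (h a ha'.1 ha'.2)

/-- Comparison of the `ℓ²` norm of `f` with its energy and its `ℓ¹` norm, at scale `r`. -/
lemma sum_sq_le_energy_add (H : ∀ y t, Near (K + 1) y t → ∃ z, Near K t z ∧ Good y z)
    (f : Zd d → ℝ) (s : Finset (Zd d)) (hs : ∀ x, f x ≠ 0 → x ∈ s) (E : ℝ)
    (hE : ∀ T : Finset (Zd d × Zd d), (∀ p ∈ T, Good p.1 p.2) →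
      ∑ p ∈ T, (f p.2 - f p.1) ^ 2 ≤ E) (r : ℕ) (hr : 0 < r) :
    ∑ x ∈ s, f x ^ 2 ≤ (2 * K + 1) ^ d * (r : ℝ) ^ 2 * E
      + 2 * (2 * K + 1) ^ d * (∑ x ∈ s, |f x|) ^ 2 / (r : ℝ) ^ d := by
  have hr' : (0 : ℝ) < r := by exact_mod_cast hr
  set W : ℝ := (2 * K + 1) ^ d with hW
  have hWn : (((2 * K + 1) ^ d : ℕ) : ℝ) = W := by push_cast; rfl
  have hpath : ∀ x u : Zd d, ∃ y : ℕ → Zd d, y 0 = (fun i => x i + min (u i) (0 : ℕ)) ∧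
      ∀ k : ℕ, Near K (fun i => x i + min (u i) k) (y k) ∧ Good (y k) (y (k + 1)) :=
    fun x u => exists_tracking H (fun k i => x i + min (u i) k) fun k i => by
      rw [abs_le]; push_cast; constructor <;> lia
  choose Y hY0 hY using hpath
  set U : Finset (Zd d) := Finset.Icc (fun _ => 1) (fun _ => (r : ℤ)) with hU
  have hUcard : (U.card : ℝ) = (r : ℝ) ^ d := by
    rw [hU, Pi.card_Icc]; simp
  have hUpos : (0 : ℝ) < U.card := by rw [hUcard]; positivity
  have hmemU : ∀ u ∈ U, ∀ i, 1 ≤ u i ∧ u i ≤ r := fun u hu i =>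
    ⟨(Finset.mem_Icc.1 hu).1 i, (Finset.mem_Icc.1 hu).2 i⟩
  have hstart : ∀ x, ∀ u ∈ U, Y x u 0 = x := fun x u hu => by
    rw [hY0]; ext i
    have := hmemU u hu i
    simp only [Nat.cast_zero]; lia
  have hend : ∀ x, ∀ u ∈ U, Near K (x + u) (Y x u r) := fun x u hu i => by
    have h₁ := (hY x u r).1 i
    simp only [min_eq_left (hmemU u hu i).2] at h₁
    exact h₁
  have henergy : ∀ u ∈ U, ∑ x ∈ s, (f x - f (Y x u r)) ^ 2 ≤ r ^ 2 * (W * E) := by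
    intro u hu
    calc ∑ x ∈ s, (f x - f (Y x u r)) ^ 2
        ≤ ∑ x ∈ s, r * ∑ k ∈ Finset.range r, (f (Y x u (k + 1)) - f (Y x u k)) ^ 2 := by
          refine Finset.sum_le_sum fun x _ => ?_
          have := sq_sub_le_mul_sum_range (fun k => f (Y x u k)) r
          simpa only [hstart x u hu] using this
      _ = r * ∑ k ∈ Finset.range r, ∑ x ∈ s, (f (Y x u (k + 1)) - f (Y x u k)) ^ 2 := by
          rw [← Finset.mul_sum, Finset.sum_comm]
      _ ≤ r * ∑ _k ∈ Finset.range r, W * E := by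
          refine mul_le_mul_of_nonneg_left (Finset.sum_le_sum fun k _ => ?_) hr'.le
          refine (sum_comp_le_of_card_fiber_le s (fun x => (Y x u k, Y x u (k + 1)))
            (F := fun p => (f p.2 - f p.1) ^ 2) (fun _ => sq_nonneg _)
            (n := (2 * K + 1) ^ d) fun p => ?_).trans ?_
          · refine card_filter_le_of_near s (fun x i => x i + min (u i) k) (fun x x' hxx => ?_) _ p.1
              fun x _ hx => ?_
            · ext i
              have := congrFun hxx i
              simpa using this
            · rw [← hx]
              exact (hY x u k).1.symm
          · rw [hWn]
            refine mul_le_mul_of_nonneg_left (hE _ fun p hp => ?_) (by positivity)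
            obtain ⟨x, -, rfl⟩ := Finset.mem_image.1 hp
            exact (hY x u k).2
      _ = r ^ 2 * (W * E) := by
          rw [Finset.sum_const, Finset.card_range, nsmul_eq_mul]; ring
  have hmass : ∀ x, ∑ u ∈ U, |f (Y x u r)| ≤ W * ∑ x ∈ s, |f x| := by
    intro x
    refine (sum_comp_le_of_card_fiber_le U (fun u => Y x u r) (F := fun z => |f z|)
      (fun _ => abs_nonneg _) (n := (2 * K + 1) ^ d) fun z => ?_).trans ?_
    · refine card_filter_le_of_near U (fun u => x + u) (add_right_injective x) _ z
        fun u hu hz => ?_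
      rw [← hz]
      exact (hend x u hu).symm
    · rw [hWn]
      refine mul_le_mul_of_nonneg_left ?_ (by positivity)
      rw [← Finset.sum_filter_ne_zero]
      refine Finset.sum_le_sum_of_subset_of_nonneg (fun z hz => ?_) fun _ _ _ => abs_nonneg _
      exact hs z (abs_ne_zero.1 (Finset.mem_filter.1 hz).2)
  have hpoint : ∀ x u : Zd d,
      f x ^ 2 ≤ (f x - f (Y x u r)) ^ 2 + 2 * (|f x| * |f (Y x u r)|) := fun x u => by
    rw [← abs_mul]
    nlinarith [le_abs_self (f x * f (Y x u r)), sq_nonneg (f (Y x u r))]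
  have htotal : (U.card : ℝ) * ∑ x ∈ s, f x ^ 2
      ≤ U.card * (r ^ 2 * (W * E)) + 2 * (W * (∑ x ∈ s, |f x|) ^ 2) := by
    calc (U.card : ℝ) * ∑ x ∈ s, f x ^ 2 = ∑ _u ∈ U, ∑ x ∈ s, f x ^ 2 := by
          rw [Finset.sum_const, nsmul_eq_mul]
      _ ≤ ∑ u ∈ U, ∑ x ∈ s, ((f x - f (Y x u r)) ^ 2 + 2 * (|f x| * |f (Y x u r)|)) :=
          Finset.sum_le_sum fun u _ => Finset.sum_le_sum fun x _ => hpoint x u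
      _ = ∑ u ∈ U, ∑ x ∈ s, (f x - f (Y x u r)) ^ 2
          + 2 * ∑ x ∈ s, |f x| * ∑ u ∈ U, |f (Y x u r)| := by
          simp only [Finset.sum_add_distrib, Finset.mul_sum]
          congr 1
          exact Finset.sum_comm
      _ ≤ ∑ _u ∈ U, r ^ 2 * (W * E) + 2 * ∑ x ∈ s, |f x| * (W * ∑ x ∈ s, |f x|) := by
          gcongr with u hu x hx
          · exact henergy u hu
          · exact hmass x
      _ = _ := by
          rw [Finset.sum_const, nsmul_eq_mul, ← Finset.sum_mul]; ring
  have hdiv := (div_le_div_iff_of_pos_right hUpos).2 htotal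
  rw [add_div, mul_div_cancel_left₀ _ hUpos.ne', mul_div_cancel_left₀ _ hUpos.ne', hUcard] at hdiv
  calc _ ≤ _ := hdiv
    _ = _ := by ring

end Averaging

/-- Optimising the scale `r` in a family of Poincaré-type inequalities yields Nash's inequality. -/
lemma nash_of_forall_scale (hd : 0 < d) {A₁ A₂ a β E : ℝ} (hA₁ : 0 < A₁) (ha : 0 < a)
    (hβ : 0 < β) (hE : 0 ≤ E) (hlow : a ≤ 2 * A₂ * β ^ 2)
    (h : ∀ r : ℕ, 0 < r → a ≤ A₁ * (r : ℝ) ^ 2 * E + A₂ * β ^ 2 / (r : ℝ) ^ d) :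
    (8 * A₁ * (2 * A₂) ^ ((2 : ℝ) / d))⁻¹ * Real.sqrt a ^ ((2 : ℝ) + 4 / d)
      * β ^ (-(4 : ℝ) / d) ≤ E := by
  have hd' : (0 : ℝ) < d := by exact_mod_cast hd
  have hA₂ : 0 < A₂ := by
    by_contra hneg
    nlinarith [sq_nonneg β, mul_nonneg (sub_nonneg.2 (not_lt.1 hneg)) (sq_nonneg β)]
  set v : ℝ := 2 * A₂ * β ^ 2 / a with hv
  have hv1 : 1 ≤ v := (one_le_div ha).2 hlow
  have hv0 : 0 < v := by linarith
  set ρ : ℝ := v ^ ((1 : ℝ) / d) with hρ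
  have hρ1 : 1 ≤ ρ := Real.one_le_rpow hv1 (by positivity)
  have hρd : ρ ^ d = v := by
    rw [hρ, ← Real.rpow_natCast, ← Real.rpow_mul hv0.le, one_div, inv_mul_cancel₀ hd'.ne',
      Real.rpow_one]
  have hρ2 : ρ ^ 2 = v ^ ((2 : ℝ) / d) := by
    rw [hρ, ← Real.rpow_natCast, ← Real.rpow_mul hv0.le]
    congr 1; push_cast; ring
  have hceil : ρ ≤ ⌈ρ⌉₊ := Nat.le_ceil ρ
  have hceil' : (⌈ρ⌉₊ : ℝ) ≤ 2 * ρ := by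
    linarith [Nat.ceil_lt_add_one (by linarith : 0 ≤ ρ)]
  have hscale := h ⌈ρ⌉₊ (Nat.ceil_pos.2 (by linarith))
  have h₁ : A₂ * β ^ 2 / (⌈ρ⌉₊ : ℝ) ^ d ≤ a / 2 := by
    calc A₂ * β ^ 2 / (⌈ρ⌉₊ : ℝ) ^ d ≤ A₂ * β ^ 2 / ρ ^ d := by gcongr
      _ = a / 2 := by rw [hρd, hv]; field_simp
  have h₂ : A₁ * (⌈ρ⌉₊ : ℝ) ^ 2 * E ≤ A₁ * (2 * ρ) ^ 2 * E := by gcongr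
  have h₃ : a ≤ 8 * A₁ * v ^ ((2 : ℝ) / d) * E := by
    rw [← hρ2]; linarith
  have hvpow : v ^ ((2 : ℝ) / d) = (2 * A₂) ^ ((2 : ℝ) / d) * β ^ ((4 : ℝ) / d)
      / a ^ ((2 : ℝ) / d) := by
    rw [hv, Real.div_rpow (by positivity) ha.le, Real.mul_rpow (by positivity) (by positivity),
      ← Real.rpow_natCast β 2, ← Real.rpow_mul hβ.le]
    congr 3; push_cast; ring
  have hsqrt : Real.sqrt a ^ ((2 : ℝ) + 4 / d) = a * a ^ ((2 : ℝ) / d) := by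
    rw [Real.sqrt_eq_rpow, ← Real.rpow_mul ha.le, ← Real.rpow_one_add' ha.le (by positivity)]
    congr 1; ring
  have hneg : β ^ (-(4 : ℝ) / d) = (β ^ ((4 : ℝ) / d))⁻¹ := by
    rw [neg_div, Real.rpow_neg hβ.le]
  rw [hsqrt, hneg]
  rw [hvpow] at h₃
  have p₁ : 0 < (2 * A₂) ^ ((2 : ℝ) / d) := by positivity
  have p₂ : 0 < β ^ ((4 : ℝ) / d) := by positivity
  have p₃ : 0 < a ^ ((2 : ℝ) / d) := by positivity
  generalize (2 * A₂) ^ ((2 : ℝ) / d) = t₁ at *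
  generalize β ^ ((4 : ℝ) / d) = t₂ at *
  generalize a ^ ((2 : ℝ) / d) = t₃ at *
  have h₄ : a * t₃ ≤ 8 * A₁ * t₁ * t₂ * E := by
    calc a * t₃ ≤ 8 * A₁ * (t₁ * t₂ / t₃) * E * t₃ := by gcongr
      _ = _ := by field_simp
  calc (8 * A₁ * t₁)⁻¹ * (a * t₃) * t₂⁻¹
      ≤ (8 * A₁ * t₁)⁻¹ * (8 * A₁ * t₁ * t₂ * E) * t₂⁻¹ := by gcongr
    _ = E := by field_simp

section Dirichlet

variable {Q : Zd d → Zd d → ℝ} {π f : Zd d → ℝ} {b : ℕ}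

lemma adjK_mul_nonneg (h0 : ∀ x y, 0 ≤ Q x y) (hπ : ∀ x, 0 < π x) (x y z : Zd d) :
    0 ≤ adjK π Q x z * Q z y :=
  mul_nonneg (div_nonneg (mul_nonneg (hπ z).le (h0 z x)) (hπ x).le) (h0 z y)

lemma dirichlet_term_nonneg (h0 : ∀ x y, 0 ≤ Q x y) (hπ : ∀ x, 0 < π x) (p : Zd d × Zd d) :
    0 ≤ (f p.2 - f p.1) ^ 2 * π p.1 * compK (adjK π Q) Q p.1 p.2 :=
  mul_nonneg (mul_nonneg (sq_nonneg _) (hπ p.1).le)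
    (tsum_nonneg fun z => adjK_mul_nonneg h0 hπ p.1 p.2 z)

/-- The symmetrisation dominates two-step moves that start by staying put. -/
lemma mul_le_compK_adjK (h0 : ∀ x y, 0 ≤ Q x y) (hb : ∀ x y, Q x y ≠ 0 → Near b x y)
    (hπ : ∀ x, 0 < π x) (x y : Zd d) : Q x x * Q x y ≤ compK (adjK π Q) Q x y := by
  have hsum : Summable fun z => adjK π Q x z * Q z y :=
    summable_of_near (x := y) (k := b) fun z hz => (hb z y (right_ne_zero_of_mul hz)).symm
  have := hsum.le_tsum x fun z _ => adjK_mul_nonneg h0 hπ x y z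
  rwa [adjK, mul_div_cancel_left₀ _ (hπ x).ne'] at this

lemma near_of_compK_adjK_ne_zero (hb : ∀ x y, Q x y ≠ 0 → Near b x y) (x y : Zd d)
    (h : compK (adjK π Q) Q x y ≠ 0) : Near (b + b) x y := by
  have : ∃ z, adjK π Q x z * Q z y ≠ 0 := by
    by_contra! hz
    exact h (by simp [compK, hz])
  obtain ⟨z, hz⟩ := this
  have hzx : Q z x ≠ 0 := fun h => left_ne_zero_of_mul hz (by simp [adjK, h])
  exact (hb z x hzx).symm.trans (hb z y (right_ne_zero_of_mul hz))

lemma summable_dirichlet (hb : ∀ x y, Q x y ≠ 0 → Near b x y) (s : Finset (Zd d))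
    (hs : ∀ x, f x ≠ 0 → x ∈ s) :
    Summable fun p : Zd d × Zd d => (f p.2 - f p.1) ^ 2 * π p.1 * compK (adjK π Q) Q p.1 p.2 := by
  set T := s.biUnion (box (b + b)) with hT
  refine summable_of_ne_finset_zero (s := (s ∪ T) ×ˢ (s ∪ T)) fun p hp => ?_
  by_contra hne
  have hnear := near_of_compK_adjK_ne_zero hb _ _ (right_ne_zero_of_mul hne)
  have hf : f p.1 ≠ 0 ∨ f p.2 ≠ 0 := by
    by_contra! hz
    exact hne (by simp [hz])
  apply hp
  simp only [Finset.mem_product, Finset.mem_union, hT, Finset.mem_biUnion]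
  rcases hf with hf | hf
  · exact ⟨.inl (hs _ hf), .inr ⟨_, hs _ hf, mem_box.2 hnear⟩⟩
  · exact ⟨.inr ⟨_, hs _ hf, mem_box.2 hnear.symm⟩, .inl (hs _ hf)⟩

lemma dirichlet_nonneg (h0 : ∀ x y, 0 ≤ Q x y) (hπ : ∀ x, 0 < π x) :
    0 ≤ dirichlet π (compK (adjK π Q) Q) f :=
  mul_nonneg (by norm_num) (tsum_nonneg fun p => dirichlet_term_nonneg h0 hπ p)

/-- Sums of squared increments along uniformly likely moves are controlled by the Dirichlet
form. -/
lemma sum_sq_sub_le_dirichlet (h0 : ∀ x y, 0 ≤ Q x y) (hb : ∀ x y, Q x y ≠ 0 → Near b x y)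
    (hπ : ∀ x, 0 < π x) {c δ : ℝ} (hc : 0 < c) (hδ : 0 < δ) (hcπ : ∀ x, c ≤ π x)
    (s : Finset (Zd d)) (hs : ∀ x, f x ≠ 0 → x ∈ s) (T : Finset (Zd d × Zd d))
    (hT : ∀ p ∈ T, δ ≤ Q p.1 p.1 ∧ δ ≤ Q p.1 p.2) :
    ∑ p ∈ T, (f p.2 - f p.1) ^ 2
      ≤ 2 / (c * δ ^ 2) * dirichlet π (compK (adjK π Q) Q) f := by
  have h₁ : ∑ p ∈ T, (f p.2 - f p.1) ^ 2 * (c * δ ^ 2)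
      ≤ 2 * dirichlet π (compK (adjK π Q) Q) f := by
    calc ∑ p ∈ T, (f p.2 - f p.1) ^ 2 * (c * δ ^ 2)
        ≤ ∑ p ∈ T, (f p.2 - f p.1) ^ 2 * π p.1 * compK (adjK π Q) Q p.1 p.2 := by
          refine Finset.sum_le_sum fun p hp => ?_
          rw [mul_assoc]
          refine mul_le_mul_of_nonneg_left ?_ (sq_nonneg _)
          refine mul_le_mul (hcπ _) ?_ (by positivity) (hπ _).le
          refine le_trans ?_ (mul_le_compK_adjK h0 hb hπ _ _)
          rw [sq]
          exact mul_le_mul (hT p hp).1 (hT p hp).2 hδ.le (h0 _ _)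
      _ ≤ ∑' p : Zd d × Zd d, (f p.2 - f p.1) ^ 2 * π p.1 * compK (adjK π Q) Q p.1 p.2 :=
          (summable_dirichlet hb s hs).sum_le_tsum T fun p _ => dirichlet_term_nonneg h0 hπ p
      _ = 2 * dirichlet π (compK (adjK π Q) Q) f := by rw [dirichlet]; ring
  rw [← Finset.sum_mul] at h₁
  rw [div_mul_eq_mul_div, le_div_iff₀ (by positivity)]
  exact h₁

end Dirichlet

end Auxiliary

theorem nash_inequality_for_power
    (d : ℕ) (hd : 0 < d) (c C ε B : ℝ) (N : ℕ)
    (hc : 0 < c) (hcC : c ≤ C) (hε : 0 < ε) (hB : 0 < B) :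
    ∃ m : ℕ, 1 ≤ m ∧ ∃ κ : ℝ, 0 < κ ∧
      ∀ (Q : Zd d → Zd d → ℝ) (π : Zd d → ℝ),
        (∀ x y, 0 ≤ Q x y) →
        (∀ x, HasSum (fun y => Q x y) 1) →
        (∀ x, 0 < π x) →
        (∀ y, HasSum (fun x => π x * Q x y) (π y)) →
        (∀ x, c ≤ π x ∧ π x ≤ C) →
        (∀ (x e : Zd d), eucNorm e = 1 → ∃ nn ≤ N, ε ≤ kerpow Q nn x (x + e)) →
        (∀ x y : Zd d, B < eucNorm (y - x) → Q x y = 0) →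
        ∀ f : Zd d → ℝ, (Function.support f).Finite →
          κ * l2norm π f ^ ((2 : ℝ) + 4 / (d : ℝ)) * l1norm π f ^ (-(4 : ℝ) / (d : ℝ))
            ≤ dirichlet π (compK (adjK π (kerpow Q m)) (kerpow Q m)) f := by
  obtain ⟨b, hbB⟩ : ∃ b : ℕ, b = ⌈B⌉₊ := ⟨_, rfl⟩
  obtain ⟨K, hK⟩ : ∃ K : ℕ, K = (2 * N).factorial * b := ⟨_, rfl⟩
  obtain ⟨m, hm⟩ : ∃ m : ℕ, m = (2 * N).factorial * (N * (d * (K + 1)) + 1) := ⟨_, rfl⟩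
  obtain ⟨η, hη⟩ : ∃ η : ℝ, η = min (min ε 1) (((2 * b + 1 : ℝ) ^ d)⁻¹) := ⟨_, rfl⟩
  have hηpos : 0 < η := by rw [hη]; positivity
  have hηε : η ≤ ε := by rw [hη]; exact (min_le_left _ _).trans (min_le_left _ _)
  have hη1 : η ≤ 1 := by rw [hη]; exact (min_le_left _ _).trans (min_le_right _ _)
  have hηb : η * (2 * b + 1) ^ d ≤ 1 := by
    rw [← le_div_iff₀ (by positivity), one_div, hη]
    exact min_le_right _ _
  obtain ⟨W, hW⟩ : ∃ W : ℝ, W = (2 * K + 1) ^ d := ⟨_, rfl⟩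
  have hWpos : 0 < W := by rw [hW]; positivity
  have hC : 0 < C := hc.trans_le hcC
  obtain ⟨A₁, hA₁⟩ : ∃ A : ℝ, A = C * W * (2 / (c * (η ^ m) ^ 2)) := ⟨_, rfl⟩
  obtain ⟨A₂, hA₂⟩ : ∃ A : ℝ, A = 2 * C * W / c ^ 2 + 1 / c := ⟨_, rfl⟩
  have hA₁pos : 0 < A₁ := by rw [hA₁]; positivity
  have hA₂pos : 0 < A₂ := by rw [hA₂]; positivity
  refine ⟨m, ?_, (8 * A₁ * (2 * A₂) ^ ((2 : ℝ) / d))⁻¹, by positivity, ?_⟩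
  · rw [hm]; exact Nat.mul_pos (Nat.factorial_pos _) (Nat.succ_pos _)
  intro Q π h0 h1 hπ _ hcπ hirr hrange f hf
  have hb : ∀ x y, Q x y ≠ 0 → Near b x y := fun x y hne => by
    rw [hbB]
    exact near_of_eucNorm_le (not_lt.1 fun hlt => hne (hrange x y hlt))
  have hN : ∀ x e : Zd d, eucNorm e = 1 → ∃ n ≤ N, 0 < n ∧ Travels Q η n x (x + e) := by
    intro x e he
    obtain ⟨n, hn, hxe⟩ := hirr x e he
    have hn0 : n ≠ 0 := by
      rintro rfl
      have hne : e ≠ 0 := by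
        rintro rfl
        simp [eucNorm] at he
      simp [kerpow, hne] at hxe
      linarith
    exact ⟨n, hn, Nat.pos_of_ne_zero hn0, (pow_le_of_le_one hηpos.le hη1 hn0).trans (hηε.trans hxe)⟩
  have hk0 := kerpow_nonneg h0 m
  have hkb := near_of_kerpow_ne_zero hb m
  set E := dirichlet π (compK (adjK π (kerpow Q m)) (kerpow Q m)) f with hEdef
  have hE0 : 0 ≤ E := dirichlet_nonneg hk0 hπ
  set s := hf.toFinset with hsdef
  have hs : ∀ x, f x ≠ 0 → x ∈ s := fun x hx => hf.mem_toFinset.2 hx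
  have hs0 : ∀ x, x ∉ s → f x = 0 := fun x hx => by
    by_contra hne
    exact hx (hs x hne)
  have hl2 : l2norm π f = Real.sqrt (∑ x ∈ s, f x ^ 2 * π x) := by
    rw [l2norm, tsum_eq_sum fun x hx => by simp [hs0 x hx]]
  have hl1 : l1norm π f = ∑ x ∈ s, |f x| * π x := by
    rw [l1norm, tsum_eq_sum fun x hx => by simp [hs0 x hx]]
  rw [hl2, hl1]
  rcases s.eq_empty_or_nonempty with hemp | ⟨x₀, hx₀⟩
  · rw [hemp]
    simp only [Finset.sum_empty, Real.sqrt_zero]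
    rw [Real.zero_rpow (by positivity), mul_zero, zero_mul]
    exact hE0
  have hfx₀ : f x₀ ≠ 0 := hf.mem_toFinset.1 hx₀
  have hl1low : c * ∑ x ∈ s, |f x| ≤ ∑ x ∈ s, |f x| * π x := by
    rw [Finset.mul_sum]
    refine Finset.sum_le_sum fun x _ => ?_
    rw [mul_comm]
    exact mul_le_mul_of_nonneg_left (hcπ x).1 (abs_nonneg _)
  have hl2up : ∑ x ∈ s, f x ^ 2 * π x ≤ C * ∑ x ∈ s, f x ^ 2 := by
    rw [Finset.mul_sum]
    refine Finset.sum_le_sum fun x _ => ?_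
    rw [mul_comm]
    exact mul_le_mul_of_nonneg_right (hcπ x).2 (sq_nonneg _)
  have hterm : ∀ x ∈ s, 0 ≤ |f x| * π x := fun x _ => mul_nonneg (abs_nonneg _) (hπ x).le
  have hsq : c * ∑ x ∈ s, f x ^ 2 * π x ≤ (∑ x ∈ s, |f x| * π x) ^ 2 := by
    refine le_trans ?_ (Finset.sum_sq_le_sq_sum_of_nonneg hterm)
    rw [Finset.mul_sum]
    refine Finset.sum_le_sum fun x _ => ?_
    rw [mul_pow, sq_abs]
    nlinarith [mul_nonneg (mul_nonneg (sq_nonneg (f x)) (hπ x).le) (sub_nonneg.2 (hcπ x).1)]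
  have ha : 0 < ∑ x ∈ s, f x ^ 2 * π x :=
    Finset.sum_pos' (fun x _ => mul_nonneg (sq_nonneg _) (hπ x).le)
      ⟨x₀, hx₀, mul_pos (by positivity) (hπ x₀)⟩
  have hβ : 0 < ∑ x ∈ s, |f x| * π x :=
    Finset.sum_pos' hterm ⟨x₀, hx₀, mul_pos (abs_pos.2 hfx₀) (hπ x₀)⟩
  have hcomp := sum_sq_le_energy_add
    (Good := fun x y => Travels Q η m x x ∧ Travels Q η m x y)
    (exists_travels_near hd h0 hb h1 hηpos hηb hN hK hm) f s hs _
    (fun T hT => sum_sq_sub_le_dirichlet hk0 hkb hπ hc (pow_pos hηpos m)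
      (fun x => (hcπ x).1) s hs T hT)
  set a := ∑ x ∈ s, f x ^ 2 * π x
  set β := ∑ x ∈ s, |f x| * π x
  have hS : 0 ≤ ∑ x ∈ s, |f x| := Finset.sum_nonneg fun x _ => abs_nonneg _
  refine nash_of_forall_scale hd hA₁pos ha hβ hE0 ?_ fun r hr => ?_
  · have h₁ : a ≤ β ^ 2 / c := by rw [le_div_iff₀ hc]; linarith
    have h₂ : 1 / c ≤ 2 * A₂ := by
      have : 0 < 2 * C * W / c ^ 2 := by positivity
      have : 0 < 1 / c := by positivity
      rw [hA₂]; linarith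
    calc a ≤ 1 / c * β ^ 2 := by rw [one_div_mul_eq_div]; exact h₁
      _ ≤ 2 * A₂ * β ^ 2 := by gcongr
  · have hr' : (0 : ℝ) < r := by exact_mod_cast hr
    have hβc : ∑ x ∈ s, |f x| ≤ β / c := by rw [le_div_iff₀ hc]; linarith
    calc a ≤ C * ∑ x ∈ s, f x ^ 2 := hl2up
      _ ≤ C * (W * (r : ℝ) ^ 2 * (2 / (c * (η ^ m) ^ 2) * E)
          + 2 * W * (∑ x ∈ s, |f x|) ^ 2 / (r : ℝ) ^ d) := by
          rw [hW]
          exact mul_le_mul_of_nonneg_left (hcomp r hr) hC.le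
      _ ≤ C * (W * (r : ℝ) ^ 2 * (2 / (c * (η ^ m) ^ 2) * E)
          + 2 * W * (β / c) ^ 2 / (r : ℝ) ^ d) := by gcongr
      _ = A₁ * (r : ℝ) ^ 2 * E + (2 * C * W / c ^ 2) * β ^ 2 / (r : ℝ) ^ d := by
          rw [hA₁]; ring
      _ ≤ A₁ * (r : ℝ) ^ 2 * E + A₂ * β ^ 2 / (r : ℝ) ^ d := by
          gcongr
          rw [hA₂]
          have : 0 < 1 / c := by positivity
          linarith

end
end

section
/- Suppose Q is a transition kernel on ℤ^d with invariant measure π satisfying c ≤ π(x) ≤ C for all x (0 < c ≤ C < ∞), and suppose the transition kernel Q*Q satisfies the d-dimensional Nash inequality: there is κ > 0 with 𝓔_{Q*Q}(f,f) ≥ κ ‖f‖_{L²(π)}^{2+4/d} ‖f‖_{L¹(π)}^{−4/d} for every f ∈ ℓ₀(ℤ^d). Then there exists a constant C₀ > 0, depending only on d, c, C and κ, such that ‖Qⁿ f‖_{L²(π)}² ≤ C₀ n^{−d/2} ‖f‖_{L¹(π)}² for every n ≥ 1 and every f ∈ ℓ₀(ℤ^d), i.e. ‖Qⁿ‖²_{L¹(π)→L²(π)}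 ≤ C₀ n^{−d/2}. -/
open scoped Classical

noncomputable section

/-- Action of the `n`-step kernel on a function. -/
def kerApply {d : ℕ} (Q : Zd d → Zd d → ℝ) (f : Zd d → ℝ) (x : Zd d) : ℝ :=
  ∑' y, Q x y * f y

/-- Nonnegative kernels whose rows sum to one. -/
structure IsMarkov {α β : Type*} (P : α → β → ℝ) : Prop where
  nonneg : ∀ x y, 0 ≤ P x y
  hasSum : ∀ x, HasSum (P x) 1

namespace IsMarkov

variable {α β γ : Type*} {P : α → β → ℝ}

/-- Total mass of the joint law with first marginal `w` and conditional law `P`. -/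
theorem hasSum_joint (hP : IsMarkov P) {w : α → ℝ} (hw : ∀ x, 0 ≤ w x) (hs : Summable w) :
    HasSum (fun p : α × β => w p.1 * P p.1 p.2) (∑' x, w x) := by
  have hrow : ∀ x, HasSum (fun y => w x * P x y) (w x) := fun x => by
    simpa using (hP.hasSum x).mul_left (w x)
  have hsum : Summable (fun p : α × β => w p.1 * P p.1 p.2) := by
    refine (summable_prod_of_nonneg fun p => mul_nonneg (hw _) (hP.nonneg _ _)).2
      ⟨fun x => (hrow x).summable, ?_⟩
    simpa only [(hrow _).tsum_eq] using hs
  have h := hsum.hasSum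
  rwa [hsum.tsum_prod, tsum_congr fun x => (hrow x).tsum_eq] at h

/-- Marginal on the second coordinate of the joint law of `w` and `P`. -/
theorem hasSum_marginal (hP : IsMarkov P) {w : α → ℝ} (hw : ∀ x, 0 ≤ w x) (hs : Summable w) :
    HasSum (fun y => ∑' x, w x * P x y) (∑' x, w x) := by
  have h := (Equiv.prodComm β α).hasSum_iff.2 (hP.hasSum_joint hw hs)
  exact h.prod_fiberwise fun y => (h.summable.prod_factor y).hasSum

theorem summable_mul (hP : IsMarkov P) {f : β → ℝ} {B : ℝ} (hf : ∀ y, |f y| ≤ B) (x : α) :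
    Summable fun y => P x y * f y := by
  refine Summable.of_norm_bounded ((hP.hasSum x).summable.mul_right B) fun y => ?_
  rw [Real.norm_eq_abs, abs_mul, abs_of_nonneg (hP.nonneg x y)]
  exact mul_le_mul_of_nonneg_left (hf y) (hP.nonneg x y)

/-- Associativity of the composition of two Markov kernels and a bounded function. -/
theorem tsum_comp_mul (hP : IsMarkov P) {R : β → γ → ℝ} (hR : IsMarkov R) {f : γ → ℝ} {B : ℝ}
    (hf : ∀ y, |f y| ≤ B) (x : α) :
    ∑' y, (∑' z, P x z * R z y) * f y = ∑' z, P x z * ∑' y, R z y * f y := by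
  have h : Summable (Function.uncurry fun z y => P x z * R z y * f y) := by
    refine Summable.of_norm_bounded
      ((hR.hasSum_joint (hP.nonneg x) (hP.hasSum x).summable).summable.mul_right B) fun p => ?_
    have hp := mul_nonneg (hP.nonneg x p.1) (hR.nonneg p.1 p.2)
    rw [Function.uncurry, Real.norm_eq_abs, abs_mul, abs_of_nonneg hp]
    exact mul_le_mul_of_nonneg_left (hf p.2) hp
  simp_rw [← tsum_mul_right, ← tsum_mul_left, ← mul_assoc]
  exact h.tsum_comm

end IsMarkov

section Kernels

variable {d : ℕ} {Q : Zd d → Zd d → ℝ} {π : Zd d → ℝ}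

theorem IsMarkov.compK {P R : Zd d → Zd d → ℝ} (hP : IsMarkov P) (hR : IsMarkov R) :
    IsMarkov (compK P R) where
  nonneg x y := tsum_nonneg fun z => mul_nonneg (hP.nonneg x z) (hR.nonneg z y)
  hasSum x := by
    have h := hR.hasSum_marginal (hP.nonneg x) (hP.hasSum x).summable
    rwa [(hP.hasSum x).tsum_eq] at h

theorem IsMarkov.kerpow (hQ : IsMarkov Q) (n : ℕ) : IsMarkov (kerpow Q n) := by
  induction n with
  | zero =>
    refine ⟨fun x y => ?_, fun x => ?_⟩
    · change 0 ≤ if x = y then (1 : ℝ) else 0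
      split_ifs <;> norm_num
    · simpa [_root_.kerpow, eq_comm] using hasSum_ite_eq x (1 : ℝ)
  | succ n ih => exact ih.compK hQ

theorem IsMarkov.adjK (hQ : ∀ x y, 0 ≤ Q x y) (hπ : ∀ x, 0 < π x)
    (hinv : ∀ y, HasSum (fun x => π x * Q x y) (π y)) : IsMarkov (adjK π Q) where
  nonneg x y := div_nonneg (mul_nonneg (hπ y).le (hQ y x)) (hπ x).le
  hasSum x := by
    have h := (hinv x).div_const (π x)
    rwa [div_self (hπ x).ne'] at h

theorem abs_kerApply_le (hQ : IsMarkov Q) {f : Zd d → ℝ} {B : ℝ} (hf : ∀ y, |f y| ≤ B)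
    (x : Zd d) : |kerApply Q f x| ≤ ∑' y, Q x y * |f y| := by
  have hs : Summable fun y => ‖Q x y * f y‖ := (hQ.summable_mul hf x).norm
  refine (norm_tsum_le_tsum_norm hs).trans_eq (tsum_congr fun y => ?_)
  rw [Real.norm_eq_abs, abs_mul, abs_of_nonneg (hQ.nonneg x y)]

theorem kerApply_kerpow (hQ : IsMarkov Q) (n : ℕ) {f : Zd d → ℝ} {B : ℝ}
    (hf : ∀ y, |f y| ≤ B) : kerApply (kerpow Q n) f = (kerApply Q)^[n] f := by
  induction n generalizing f with
  | zero =>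
    funext x
    change ∑' y, (if x = y then (1 : ℝ) else 0) * f y = f x
    rw [tsum_eq_single x fun y hy => by simp [hy.symm]]
    simp
  | succ n ih =>
    rw [Function.iterate_succ_apply, ← ih (f := kerApply Q f)]
    · funext x
      exact (hQ.kerpow n).tsum_comp_mul hQ hf x
    · intro x
      have hB : ∀ y, |(|f y|)| ≤ B := by simpa using hf
      refine (abs_kerApply_le hQ hf x).trans ?_
      have h := (hQ.hasSum x).mul_right B
      rw [one_mul] at h
      rw [← h.tsum_eq]
      exact (hQ.summable_mul hB x).tsum_le_tsum
        (fun y => mul_le_mul_of_nonneg_left (hf y) (hQ.nonneg x y)) h.summable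

theorem abs_le_of_summable_l1 {c : ℝ} (hc : 0 < c) (hcπ : ∀ x, c ≤ π x) {f : Zd d → ℝ}
    (hf : Summable fun x => |f x| * π x) (x : Zd d) : |f x| ≤ l1norm π f / c := by
  rw [le_div_iff₀ hc]
  refine (mul_le_mul_of_nonneg_left (hcπ x) (abs_nonneg _)).trans ?_
  exact hf.le_tsum x fun y _ => mul_nonneg (abs_nonneg _) (hc.le.trans (hcπ y))

theorem summable_sq_of_summable_l1 (hπ : ∀ x, 0 < π x) {f : Zd d → ℝ} {B : ℝ}
    (hf : Summable fun x => |f x| * π x) (hB : ∀ x, |f x| ≤ B) :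
    Summable fun x => f x ^ 2 * π x := by
  refine Summable.of_nonneg_of_le (fun x => mul_nonneg (sq_nonneg _) (hπ x).le) (fun x => ?_)
    (hf.mul_left B)
  rw [← sq_abs, sq, ← mul_assoc]
  exact mul_le_mul_of_nonneg_right (mul_le_mul_of_nonneg_right (hB x) (abs_nonneg _)) (hπ x).le

/-- A Markov kernel contracts `L¹` of an invariant measure. -/
theorem kerApply_l1_contraction (hQ : IsMarkov Q) (hπ : ∀ x, 0 < π x)
    (hinv : ∀ y, HasSum (fun x => π x * Q x y) (π y)) {f : Zd d → ℝ} {B : ℝ}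
    (hB : ∀ x, |f x| ≤ B) (hf : Summable fun x => |f x| * π x) :
    (Summable fun x => |kerApply Q f x| * π x) ∧ l1norm π (kerApply Q f) ≤ l1norm π f := by
  have h := (IsMarkov.adjK hQ.nonneg hπ hinv).hasSum_marginal
    (fun x => mul_nonneg (abs_nonneg (f x)) (hπ x).le) hf
  have hle : ∀ x, |kerApply Q f x| * π x ≤ ∑' y, |f y| * π y * adjK π Q y x := fun x => by
    refine (mul_le_mul_of_nonneg_right (abs_kerApply_le hQ hB x) (hπ x).le).trans_eq ?_
    rw [← tsum_mul_right]
    refine tsum_congr fun y => ?_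
    have := (hπ y).ne'
    simp only [adjK]
    field_simp
  have hs : Summable fun x => |kerApply Q f x| * π x :=
    Summable.of_nonneg_of_le (fun x => mul_nonneg (abs_nonneg _) (hπ x).le) hle h.summable
  refine ⟨hs, ?_⟩
  rw [l1norm, l1norm, ← h.tsum_eq]
  exact hs.tsum_le_tsum hle h.summable

theorem l2norm_sq (hπ : ∀ x, 0 < π x) (f : Zd d → ℝ) :
    l2norm π f ^ 2 = ∑' x, f x ^ 2 * π x :=
  Real.sq_sqrt (tsum_nonneg fun x => mul_nonneg (sq_nonneg _) (hπ x).le)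

theorem kerApply_eq_sum {f : Zd d → ℝ} {s : Finset (Zd d)} (hs : ∀ x ∉ s, f x = 0)
    (x : Zd d) : kerApply Q f x = ∑ y ∈ s, Q x y * f y :=
  tsum_eq_sum fun y hy => by rw [hs y hy, mul_zero]

theorem summable_kerApply_sq_and_dirichlet_eq (hQ : IsMarkov Q) (hπ : ∀ x, 0 < π x)
    (hinv : ∀ y, HasSum (fun x => π x * Q x y) (π y)) {f : Zd d → ℝ} {s : Finset (Zd d)}
    (hs : ∀ x ∉ s, f x = 0) :
    (Summable fun x => kerApply Q f x ^ 2 * π x) ∧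
      dirichlet π (compK (adjK π Q) Q) f =
        ∑' x, f x ^ 2 * π x - ∑' x, kerApply Q f x ^ 2 * π x := by
  set K := compK (adjK π Q) Q with hKdef
  have hadj := IsMarkov.adjK hQ.nonneg hπ hinv
  have hK : IsMarkov K := hadj.compK hQ
  have hQ1 : ∀ x y, Q x y ≤ 1 := fun x y =>
    le_hasSum (hQ.hasSum x) y fun z _ => hQ.nonneg x z
  have hS : ∀ x y, HasSum (fun z => π z * Q z x * Q z y) (π x * K x y) := fun x y => by
    have hsum : Summable fun z => π z * Q z x * Q z y :=
      Summable.of_nonneg_of_le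
        (fun z => mul_nonneg (mul_nonneg (hπ z).le (hQ.nonneg z x)) (hQ.nonneg z y))
        (fun z => mul_le_of_le_one_right (mul_nonneg (hπ z).le (hQ.nonneg z x)) (hQ1 z y))
        (hinv x).summable
    convert hsum.hasSum using 1
    rw [hKdef, compK, ← tsum_mul_left]
    refine tsum_congr fun z => ?_
    have := (hπ x).ne'
    simp only [adjK]
    field_simp
  have hsymm : ∀ x y, π x * K x y = π y * K y x := fun x y =>
    (hS x y).unique (by simpa only [mul_right_comm] using hS y x)
  have hsq : Summable fun x => f x ^ 2 * π x :=
    summable_of_ne_finset_zero (s := s) fun x hx => by simp [hs x hx]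
  have hA := hK.hasSum_joint (fun x => mul_nonneg (sq_nonneg (f x)) (hπ x).le) hsq
  have hB : HasSum (fun p : Zd d × Zd d => f p.2 ^ 2 * π p.1 * K p.1 p.2)
      (∑' x, f x ^ 2 * π x) := by
    convert (Equiv.prodComm (Zd d) (Zd d)).hasSum_iff.2 hA using 2 with p
    simp only [Function.comp, Equiv.prodComm_apply, Prod.fst_swap, Prod.snd_swap, mul_assoc]
    rw [hsymm]
  have hC : HasSum (fun p : Zd d × Zd d => f p.1 * f p.2 * (π p.1 * K p.1 p.2))
      (∑ p ∈ s ×ˢ s, f p.1 * f p.2 * (π p.1 * K p.1 p.2)) := by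
    refine hasSum_sum_of_ne_finset_zero fun p hp => ?_
    rw [Finset.mem_product, not_and_or] at hp
    rcases hp with hp | hp <;> simp [hs _ hp]
  have hE : HasSum (fun z => kerApply Q f z ^ 2 * π z)
      (∑ p ∈ s ×ˢ s, f p.1 * f p.2 * (π p.1 * K p.1 p.2)) := by
    have h := hasSum_sum fun (p : Zd d × Zd d) (_ : p ∈ s ×ˢ s) =>
      (hS p.1 p.2).mul_left (f p.1 * f p.2)
    refine (funext fun z => ?_ : (fun z => kerApply Q f z ^ 2 * π z) = _) ▸ h
    rw [kerApply_eq_sum hs, sq, Finset.sum_mul_sum, Finset.sum_product, Finset.sum_mul]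
    refine Finset.sum_congr rfl fun x _ => ?_
    rw [Finset.sum_mul]
    exact Finset.sum_congr rfl fun y _ => by ring
  refine ⟨hE.summable, ?_⟩
  have hD := ((hA.add hB).sub (hC.mul_left 2)).tsum_eq
  rw [hE.tsum_eq, dirichlet, tsum_congr fun p => show _ = _ from ?_, hD]
  · ring
  · ring

/-- One-step `L²` decay for integrable functions, from the Nash inequality for finitely supported
ones. -/
theorem l2_step_of_nash {p κ : ℝ} (hp : 0 < p) (hκ : 0 < κ) (hQ : IsMarkov Q)
    (hπ : ∀ x, 0 < π x) (hinv : ∀ y, HasSum (fun x => π x * Q x y) (π y))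
    (hnash : ∀ f : Zd d → ℝ, (Function.support f).Finite →
      κ * l2norm π f ^ (2 + 2 * p) * l1norm π f ^ (-(2 * p))
        ≤ dirichlet π (compK (adjK π Q) Q) f)
    {f : Zd d → ℝ} {B M : ℝ} (hB : ∀ x, |f x| ≤ B)
    (hf : Summable fun x => |f x| * π x) (hfM : l1norm π f ≤ M) :
    l2norm π (kerApply Q f) ^ 2 + κ * (l2norm π f ^ 2) ^ (1 + p) * M ^ (-(2 * p))
      ≤ l2norm π f ^ 2 := by
  have hfin : ∀ s : Finset (Zd d), ∑' x, kerApply Q ((s : Set (Zd d)).indicator f) x ^ 2 * π x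
      + κ * (∑ x ∈ s, f x ^ 2 * π x) ^ (1 + p) * M ^ (-(2 * p)) ≤ ∑ x ∈ s, f x ^ 2 * π x ∧
      Summable fun x => kerApply Q ((s : Set (Zd d)).indicator f) x ^ 2 * π x := by
    intro s
    set g := (s : Set (Zd d)).indicator f with hg
    have hgs : ∀ x ∉ s, g x = 0 := fun x hx => by simp [hg, hx]
    have hgf : ∀ x ∈ s, g x = f x := fun x hx => by simp [hg, hx]
    obtain ⟨hsum, hdir⟩ := summable_kerApply_sq_and_dirichlet_eq hQ hπ hinv hgs
    refine ⟨?_, hsum⟩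
    have hl2 : ∑' x, g x ^ 2 * π x = ∑ x ∈ s, f x ^ 2 * π x := by
      rw [tsum_eq_sum fun x hx => by rw [hgs x hx]; simp]
      exact Finset.sum_congr rfl fun x hx => by rw [hgf x hx]
    have hl1 : l1norm π g = ∑ x ∈ s, |f x| * π x := by
      rw [l1norm, tsum_eq_sum fun x hx => by rw [hgs x hx]; simp]
      exact Finset.sum_congr rfl fun x hx => by rw [hgf x hx]
    have hl1M : l1norm π g ≤ M := by
      rw [hl1]
      exact (hf.sum_le_tsum s fun x _ => mul_nonneg (abs_nonneg _) (hπ x).le).trans hfM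
    have hN := hnash g (s.finite_toSet.subset fun x hx => by
      by_contra h
      exact hx (hgs x h))
    rw [hdir, hl2] at hN
    have hpow : l2norm π g ^ (2 + 2 * p) = (∑ x ∈ s, f x ^ 2 * π x) ^ (1 + p) := by
      rw [← hl2, ← l2norm_sq hπ, ← Real.rpow_natCast, ← Real.rpow_mul (show 0 ≤ l2norm π g from Real.sqrt_nonneg _)]
      congr 1
      push_cast
      ring
    rw [hpow] at hN
    have hnn : 0 ≤ ∑ x ∈ s, f x ^ 2 * π x :=
      Finset.sum_nonneg fun x _ => mul_nonneg (sq_nonneg _) (hπ x).le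
    rcases (show 0 ≤ l1norm π g from tsum_nonneg fun x =>
      mul_nonneg (abs_nonneg _) (hπ x).le).eq_or_lt with h0 | hpos
    · have hz : ∀ x ∈ s, f x = 0 := fun x hx => by
        rw [hl1, eq_comm, Finset.sum_eq_zero_iff_of_nonneg
          fun x _ => mul_nonneg (abs_nonneg _) (hπ x).le] at h0
        simpa [(hπ x).ne'] using h0 x hx
      have hz2 : ∑ x ∈ s, f x ^ 2 * π x = 0 :=
        Finset.sum_eq_zero fun x hx => by simp [hz x hx]
      rw [hz2, Real.zero_rpow (by positivity)] at hN ⊢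
      linarith
    · have := mul_le_mul_of_nonneg_left
        (Real.rpow_le_rpow_of_nonpos hpos hl1M (by linarith : -(2 * p) ≤ 0))
        (mul_nonneg hκ.le (Real.rpow_nonneg hnn (1 + p)))
      linarith
  rw [l2norm_sq hπ, l2norm_sq hπ, ← le_sub_iff_add_le]
  have hL2 : Filter.Tendsto (fun s : Finset (Zd d) => ∑ x ∈ s, f x ^ 2 * π x) Filter.atTop
      (nhds (∑' x, f x ^ 2 * π x)) := (summable_sq_of_summable_l1 hπ hf hB).hasSum
  have hrhs := hL2.sub (((hL2.rpow_const (p := 1 + p) (Or.inr (by linarith))).const_mul κ).mul_const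
    (M ^ (-(2 * p))))
  refine Real.tsum_le_of_sum_le (fun x => mul_nonneg (sq_nonneg _) (hπ x).le) fun t => ?_
  have hlhs : Filter.Tendsto (fun s : Finset (Zd d) =>
      ∑ x ∈ t, kerApply Q ((s : Set (Zd d)).indicator f) x ^ 2 * π x) Filter.atTop
      (nhds (∑ x ∈ t, kerApply Q f x ^ 2 * π x)) := by
    refine tendsto_finsetSum t fun x _ => (Filter.Tendsto.pow ?_ 2).mul_const _
    refine Filter.Tendsto.congr (fun s => ?_) (hQ.summable_mul hB x).hasSum
    rw [kerApply_eq_sum (s := s) fun y hy => by simp [hy]]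
    exact Finset.sum_congr rfl fun y hy => by simp [hy]
  refine le_of_tendsto_of_tendsto' hlhs hrhs fun s => ?_
  have := (hfin s).2.sum_le_tsum t fun x _ => mul_nonneg (sq_nonneg _) (hπ x).le
  linarith [(hfin s).1]

end Kernels

/-- Polynomial decay of nonnegative sequences with `a (n + 1) + k * a n ^ (1 + p) ≤ a n`. -/
theorem le_rpow_of_nash_recursion {a : ℕ → ℝ} {k p : ℝ} (hp : 0 < p) (hk : 0 < k)
    (ha : ∀ n, 0 ≤ a n) (hrec : ∀ n, a (n + 1) + k * a n ^ (1 + p) ≤ a n) {n : ℕ}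
    (hn : 1 ≤ n) : a n ≤ (p * k * n) ^ (-p⁻¹) := by
  have key : ∀ n, 0 < a n → p * k * n ≤ a n ^ (-p) := by
    intro n
    induction n with
    | zero => intro h; simpa using Real.rpow_nonneg h.le _
    | succ n ih =>
      intro h
      have hpos : 0 < a n := h.trans_le <| by
        linarith [hrec n, mul_nonneg hk.le (Real.rpow_nonneg (ha n) (1 + p))]
      set t := k * a n ^ p with ht
      have hle : a (n + 1) ≤ a n * Real.exp (-t) := by
        have h1 := hrec n
        rw [Real.rpow_add hpos, Real.rpow_one] at h1
        nlinarith [Real.add_one_le_exp (-t)]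
      calc p * k * ((n + 1 : ℕ) : ℝ) = p * k * n + p * k := by push_cast; ring
        _ ≤ a n ^ (-p) + p * k := by linarith [ih hpos]
        _ = a n ^ (-p) * (p * t + 1) := by
          have : a n ^ (-p) * a n ^ p = 1 := by rw [← Real.rpow_add hpos]; simp
          rw [ht]
          linear_combination (-p * k) * this
        _ ≤ a n ^ (-p) * Real.exp (p * t) :=
          mul_le_mul_of_nonneg_left (Real.add_one_le_exp _) (Real.rpow_nonneg hpos.le _)
        _ = (a n * Real.exp (-t)) ^ (-p) := by
          rw [Real.mul_rpow hpos.le (Real.exp_pos _).le, ← Real.exp_mul]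
          ring_nf
        _ ≤ a (n + 1) ^ (-p) := Real.rpow_le_rpow_of_nonpos h hle (by linarith)
  have hn0 : (0 : ℝ) < n := by exact_mod_cast hn
  rcases (ha n).eq_or_lt with h | h
  · rw [← h]
    positivity
  · have := Real.rpow_le_rpow_of_nonpos (by positivity) (key n h)
      (show -p⁻¹ ≤ 0 by simpa using hp.le)
    rwa [← Real.rpow_mul h.le, neg_mul_neg, mul_inv_cancel₀ hp.ne', Real.rpow_one] at this

theorem l1_l2_decay_from_nash
    (d : ℕ) (hd : 0 < d) (c C κ : ℝ)
    (hc : 0 < c) (hcC : c ≤ C) (hκ : 0 < κ) :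
    ∃ C₀ : ℝ, 0 < C₀ ∧
      ∀ (Q : Zd d → Zd d → ℝ) (π : Zd d → ℝ),
        (∀ x y, 0 ≤ Q x y) →
        (∀ x, HasSum (fun y => Q x y) 1) →
        (∀ x, 0 < π x) →
        (∀ y, HasSum (fun x => π x * Q x y) (π y)) →
        (∀ x, c ≤ π x ∧ π x ≤ C) →
        (∀ f : Zd d → ℝ, (Function.support f).Finite →
          κ * l2norm π f ^ ((2 : ℝ) + 4 / (d : ℝ)) * l1norm π f ^ (-(4 : ℝ) / (d : ℝ))
            ≤ dirichlet π (compK (adjK π Q) Q) f) →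
        ∀ n : ℕ, 1 ≤ n → ∀ f : Zd d → ℝ, (Function.support f).Finite →
          l2norm π (kerApply (kerpow Q n) f) ^ 2
            ≤ C₀ * (n : ℝ) ^ (-(d : ℝ) / 2) * l1norm π f ^ 2 := by
  have hdpos : (0 : ℝ) < d := by exact_mod_cast hd
  set p : ℝ := 2 / d with hpdef
  have hp : 0 < p := by positivity
  refine ⟨(p * κ) ^ (-p⁻¹), by positivity, fun Q π hQ0 hQ1 hπ hinv hπb hnash n hn f hf => ?_⟩
  have hQ : IsMarkov Q := ⟨hQ0, hQ1⟩
  have hfs : Summable fun x => |f x| * π x :=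
    summable_of_ne_finset_zero (s := hf.toFinset) fun x hx => by
      have : f x = 0 := by simpa using hx
      simp [this]
  have hbound := fun {g : Zd d → ℝ} => abs_le_of_summable_l1 hc (fun x => (hπb x).1) (f := g)
  have hnash' : ∀ f : Zd d → ℝ, (Function.support f).Finite →
      κ * l2norm π f ^ (2 + 2 * p) * l1norm π f ^ (-(2 * p))
        ≤ dirichlet π (compK (adjK π Q) Q) f := fun g hg => by
    convert hnash g hg using 3 <;> rw [hpdef] <;> ring_nf
  have hiter : ∀ m, (Summable fun x => |(kerApply Q)^[m] f x| * π x) ∧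
      l1norm π ((kerApply Q)^[m] f) ≤ l1norm π f := fun m => by
    induction m with
    | zero => exact ⟨hfs, le_rfl⟩
    | succ m ih =>
      rw [Function.iterate_succ_apply']
      have h := kerApply_l1_contraction hQ hπ hinv (hbound ih.1) ih.1
      exact ⟨h.1, h.2.trans ih.2⟩
  rw [kerApply_kerpow hQ n (hbound hfs)]
  rcases (show 0 ≤ l1norm π f from tsum_nonneg fun x =>
    mul_nonneg (abs_nonneg _) (hπ x).le).eq_or_lt with h0 | hM
  · have hz : ∀ x, (kerApply Q)^[n] f x = 0 := fun x => by
      have h := hbound (hiter n).1 x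
      have h' := div_le_div_of_nonneg_right (hiter n).2 hc.le
      rw [← h0, zero_div] at h'
      exact abs_nonpos_iff.1 (h.trans h')
    simp [l2norm, hz, ← h0]
  · set M := l1norm π f
    have hdecay := le_rpow_of_nash_recursion
      (a := fun m => l2norm π ((kerApply Q)^[m] f) ^ 2) hp
      (mul_pos hκ (Real.rpow_pos_of_pos hM (-(2 * p)))) (fun m => sq_nonneg _) (fun m => by
        have h := l2_step_of_nash hp hκ hQ hπ hinv hnash' (hbound (hiter m).1)
          (hiter m).1 (hiter m).2
        simp only [Function.iterate_succ_apply']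
        linarith) hn
    refine hdecay.trans_eq ?_
    have hexp : -(d : ℝ) / 2 = -p⁻¹ := by rw [hpdef, inv_div, neg_div]
    have hMp : (M ^ (-(2 * p))) ^ (-p⁻¹) = M ^ 2 := by
      rw [← Real.rpow_mul hM.le, ← Real.rpow_natCast]
      congr 1
      field_simp
      norm_num
    rw [hexp, ← mul_assoc, Real.mul_rpow (by positivity) (by positivity),
      Real.mul_rpow (by positivity) (by positivity), hMp]
    ring

end
end
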